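/- Let F be an infinite field and let K be a subfield of F such that the subgroup {u ∈ F^× : u ∈ K} of the multiplicative group F^× has finite index in F^×. Then K = F. -/

import Mathlib

/-!
Suppose first that `K` is an infinite subfield and `a ∉ K`. The elements `a + k` with `k ∈ K` are
nonzero, so two of them lie in the same coset of the units in `K`, say `(a + k) * c = a + l` with
`c ∈ K` and `k ≠ l`. This equation is linear in `a` over `K` and `c ≠ 1`, so solving it gives
`a ∈ K`, a contradiction. If `K` were finite, finite index would make the whole field finite.

The argument needs no commutativity. A subring of a division ring whose units have finite index is
closed under inverses: every unit of the division ring has a positive power that is a unit of the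
subring.
-/

/-- The subgroup of the multiplicative group `Fˣ` consisting of units lying in the
subfield `K`. -/
def Subfield.unitsIn {F : Type*} [Field F] (K : Subfield F) : Subgroup Fˣ where
  carrier := {u : Fˣ | (u : F) ∈ K}
  one_mem' := K.one_mem
  mul_mem' := fun ha hb => K.mul_mem ha hb
  inv_mem' := fun {a} ha => by simpa using K.inv_mem ha

theorem unitsIn_eq_units {F : Type*} [Field F] (K : Subfield F) :
    K.unitsIn = K.toSubmonoid.units :=
  le_antisymm (fun _ hu => ⟨hu, K.unitsIn.inv_mem hu⟩) fun _ hu => hu.1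

section GroupWithZero

variable {G₀ : Type*} [GroupWithZero G₀]

theorem finite_of_finite_units [Finite G₀ˣ] : Finite G₀ := by
  classical
  exact .of_equiv (Option G₀ˣ) WithZero.withZeroUnitsEquiv.toEquiv

variable (S : Submonoid G₀) [S.units.FiniteIndex]

theorem infinite_of_finiteIndex_units [Infinite G₀] : Infinite S := by
  refine not_finite_iff_infinite.mp fun _ => ?_
  have : Finite S.units := .of_equiv Sˣ S.unitsEquivUnitsType.symm.toEquiv
  have : Finite G₀ˣ :=
    (Subgroup.finite_iff_finite_and_finiteIndex S.units).mpr ⟨this, inferInstance⟩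
  have : Finite G₀ := finite_of_finite_units
  exact not_finite G₀

theorem inv_mem_of_finiteIndex_units {x : G₀} (hx : x ∈ S) : x⁻¹ ∈ S := by
  obtain rfl | hx₀ := eq_or_ne x 0
  · rwa [inv_zero]
  obtain ⟨n, hn, -, hxn⟩ := Subgroup.exists_pow_mem_of_index_ne_zero
    (Subgroup.FiniteIndex.index_ne_zero (H := S.units)) (Units.mk0 x hx₀)
  have hinv : (x ^ n)⁻¹ ∈ S := by simpa using hxn.2
  have hfactor : x⁻¹ = x ^ (n - 1) * (x ^ n)⁻¹ := by
    rw [eq_mul_inv_iff_mul_eq₀ (pow_ne_zero n hx₀), ← mul_pow_sub_one hn.ne' x,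
      inv_mul_cancel_left₀ hx₀]
  rw [hfactor]
  exact S.mul_mem (S.pow_mem hx _) hinv

end GroupWithZero

section DivisionRing

variable {D : Type*} [DivisionRing D]

theorem mem_of_add_mul_eq_add (K : Subfield D) {a k l c : D} (hk : k ∈ K) (hl : l ∈ K)
    (hc : c ∈ K) (hkl : k ≠ l) (h : (a + k) * c = a + l) : a ∈ K := by
  have hc₁ : c - 1 ≠ 0 := fun hc₁ => hkl <| by
    rwa [sub_eq_zero.mp hc₁, mul_one, add_right_inj] at h
  have ha : a * (c - 1) = l - k * c := by
    rw [mul_sub_one, sub_eq_sub_iff_add_eq_add, ← add_mul, h, add_comm]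
  rw [eq_div_of_mul_eq hc₁ ha]
  exact K.div_mem (K.sub_mem hl (K.mul_mem hk hc)) (K.sub_mem hc K.one_mem)

theorem eq_top_of_infinite_of_finiteIndex_units (K : Subfield D) [Infinite K]
    [K.toSubmonoid.units.FiniteIndex] : K = ⊤ := by
  refine eq_top_iff.mpr fun a _ => by_contra fun ha => ?_
  have hne (k : K) : a + k ≠ 0 := fun h =>
    ha (eq_neg_of_add_eq_zero_left h ▸ K.neg_mem k.2)
  obtain ⟨k, l, hkl, hcoset⟩ := Finite.exists_ne_map_eq_of_infinite fun k : K =>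
    (Units.mk0 (a + k) (hne k) : Dˣ ⧸ K.toSubmonoid.units)
  have hc : (a + k : D)⁻¹ * (a + l) ∈ K := by
    simpa using (QuotientGroup.eq.mp hcoset).1
  exact ha <| mem_of_add_mul_eq_add K k.2 l.2 hc (Subtype.coe_ne_coe.mpr hkl)
    (mul_inv_cancel_left₀ (hne k) _)

theorem subfield_eq_top_of_finiteIndex_units_general [Infinite D] (R : Subring D)
    (h : R.toSubmonoid.units.FiniteIndex) : R = ⊤ := by
  let K : Subfield D :=
    { R with inv_mem' := fun _ => inv_mem_of_finiteIndex_units R.toSubmonoid }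
  have : K.toSubmonoid.units.FiniteIndex := h
  have : Infinite K := infinite_of_finiteIndex_units K.toSubmonoid
  exact congrArg Subfield.toSubring (eq_top_of_infinite_of_finiteIndex_units K)

end DivisionRing

/-- If `F` is an infinite field and `K` a subfield whose group of units has finite index
in `Fˣ`, then `K = F`. -/
theorem subfield_eq_top_of_finiteIndex_units {F : Type*} [Field F] [Infinite F]
    (K : Subfield F) (h : (Subfield.unitsIn K).FiniteIndex) : K = ⊤ :=
  eq_top_iff.mpr fun x _ =>
    (subfield_eq_top_of_finiteIndex_units_general K.toSubring (unitsIn_eq_units K ▸ h)).ge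
      (Subring.mem_top x)
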